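/- Assume m13 + m33 + 1 = 0 (the class 1 nontypicality condition; note m23 + m33 ≠ 0 then follows from m13 ≥ m23). Then I_1 := V_2 ⊕ V_3 is a proper invariant subspace of W, every proper invariant subspace of W is contained in I_1, and the operators induced by E11, E22, E33, E12, E21, E23, E32 on the quotient space W/I_1 leave no subspace invariant except {0} and W/I_1; i.e. W/I_1 carries the class 1 nontypical irreducible representation of U_q[gl(2/1)]. -/

import Mathlib

noncomputable section

/-- The `q`-number `[x] = (q^x - q^(-x))/(q - q⁻¹)`. -/
def qn (q : ℝ) (x : ℤ) : ℝ := (q ^ x - q ^ (-x)) / (q - q⁻¹)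

/-- The triple `(m12, m22, m32)` attached to the sector `k ∈ {0,1,2,3}`. -/
def trip (m13 m23 m33 : ℤ) : Fin 4 → ℤ × ℤ × ℤ
  | 0 => (m13, m23, m33)
  | 1 => (m13, m23 - 1, m33 + 1)
  | 2 => (m13 - 1, m23, m33 + 1)
  | 3 => (m13 - 1, m23 - 1, m33 + 2)

def M12 (m13 m23 m33 : ℤ) (k : Fin 4) : ℤ := (trip m13 m23 m33 k).1
def M22 (m13 m23 m33 : ℤ) (k : Fin 4) : ℤ := (trip m13 m23 m33 k).2.1
def M32 (m13 m23 m33 : ℤ) (k : Fin 4) : ℤ := (trip m13 m23 m33 k).2.2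

/-- `m11` is in the allowed range `m22 ≤ m11 ≤ m12` of the sector `k`. -/
def InR (m13 m23 m33 : ℤ) (k : Fin 4) (x : ℤ) : Prop :=
  M22 m13 m23 m33 k ≤ x ∧ x ≤ M12 m13 m23 m33 k

instance (m13 m23 m33 : ℤ) (k : Fin 4) (x : ℤ) : Decidable (InR m13 m23 m33 k x) :=
  instDecidableAnd

/-- The index set of the basis `v(k, m11)` of `W`. -/
abbrev Idx (m13 m23 m33 : ℤ) : Type :=
  {p : Fin 4 × ℤ // InR m13 m23 m33 p.1 p.2}

/-- The module `W = W^q([m13,m23,m33])`, realized as the free complex vector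
space on the basis `v(k, m11)`, `k ∈ {0,1,2,3}`, `m22 ≤ m11 ≤ m12`. -/
abbrev Wsp (m13 m23 m33 : ℤ) : Type := Idx m13 m23 m33 →₀ ℂ

/-- The basis vector `v(k, m11)` (zero if `m11` is out of range). -/
def bv (m13 m23 m33 : ℤ) (k : Fin 4) (x : ℤ) : Wsp m13 m23 m33 :=
  if h : InR m13 m23 m33 k x then Finsupp.single ⟨(k, x), h⟩ 1 else 0

/-- The sector `V_k`, the span of the `v(k, ·)`. -/
def Vk (m13 m23 m33 : ℤ) (k : Fin 4) : Submodule ℂ (Wsp m13 m23 m33) :=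
  Submodule.span ℂ (Set.range (bv m13 m23 m33 k))

/-- The Gel'fand--Zetlin realization of the induced `U_q[gl(2/1)]`-module
`W^q([m13,m23,m33])`: seven linear operators acting on the basis `v(k, m11)`
by the stated formulas (terms with `m11` out of range being `0`). -/
structure GZ (q : ℝ) (m13 m23 m33 : ℤ) where
  E11 : Wsp m13 m23 m33 →ₗ[ℂ] Wsp m13 m23 m33
  E22 : Wsp m13 m23 m33 →ₗ[ℂ] Wsp m13 m23 m33
  E33 : Wsp m13 m23 m33 →ₗ[ℂ] Wsp m13 m23 m33
  E12 : Wsp m13 m23 m33 →ₗ[ℂ] Wsp m13 m23 m33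
  E21 : Wsp m13 m23 m33 →ₗ[ℂ] Wsp m13 m23 m33
  E23 : Wsp m13 m23 m33 →ₗ[ℂ] Wsp m13 m23 m33
  E32 : Wsp m13 m23 m33 →ₗ[ℂ] Wsp m13 m23 m33
  hE11 : ∀ (k : Fin 4) (x : ℤ), InR m13 m23 m33 k x →
    E11 (bv m13 m23 m33 k x) = (x : ℂ) • bv m13 m23 m33 k x
  hE22 : ∀ (k : Fin 4) (x : ℤ), InR m13 m23 m33 k x →
    E22 (bv m13 m23 m33 k x) =
      ((M12 m13 m23 m33 k + M22 m13 m23 m33 k - x : ℤ) : ℂ) • bv m13 m23 m33 k x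
  hE33 : ∀ (k : Fin 4) (x : ℤ), InR m13 m23 m33 k x →
    E33 (bv m13 m23 m33 k x) = ((M32 m13 m23 m33 k : ℤ) : ℂ) • bv m13 m23 m33 k x
  hE12 : ∀ (k : Fin 4) (x : ℤ), InR m13 m23 m33 k x →
    E12 (bv m13 m23 m33 k x) =
      ((Real.sqrt (qn q (M12 m13 m23 m33 k - x) * qn q (x - M22 m13 m23 m33 k + 1)) : ℝ) : ℂ) •
        bv m13 m23 m33 k (x + 1)
  hE21 : ∀ (k : Fin 4) (x : ℤ), InR m13 m23 m33 k x →
    E21 (bv m13 m23 m33 k x) =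
      ((Real.sqrt (qn q (M12 m13 m23 m33 k - x + 1) * qn q (x - M22 m13 m23 m33 k)) : ℝ) : ℂ) •
        bv m13 m23 m33 k (x - 1)
  hE23₀ : ∀ x : ℤ, InR m13 m23 m33 0 x → E23 (bv m13 m23 m33 0 x) = 0
  hE23₁ : ∀ x : ℤ, InR m13 m23 m33 1 x →
    E23 (bv m13 m23 m33 1 x) =
      ((Real.sqrt (qn q (x - m23 + 1) / qn q (m13 - m23 + 1)) * qn q (m23 + m33) : ℝ) : ℂ) •
        bv m13 m23 m33 0 x
  hE23₂ : ∀ x : ℤ, InR m13 m23 m33 2 x →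
    E23 (bv m13 m23 m33 2 x) =
      ((Real.sqrt (qn q (m13 - x) / qn q (m13 - m23)) * qn q (m13 + m33 + 1) : ℝ) : ℂ) •
        bv m13 m23 m33 0 x
  hE23₃ : ∀ x : ℤ, InR m13 m23 m33 3 x →
    E23 (bv m13 m23 m33 3 x) =
      ((q⁻¹ * Real.sqrt (qn q (m13 - x) / qn q (m13 - m23 + 1)) * qn q (m13 + m33 + 1) : ℝ) : ℂ) •
          bv m13 m23 m33 1 x
        - ((q⁻¹ * Real.sqrt (qn q (x - m23 + 1) * qn q (m13 - m23)) *
            (qn q (m23 + m33) / qn q (m13 - m23 + 1)) : ℝ) : ℂ) • bv m13 m23 m33 2 x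
  hE32₀ : ∀ x : ℤ, InR m13 m23 m33 0 x →
    E32 (bv m13 m23 m33 0 x) =
      ((Real.sqrt (qn q (x - m23 + 1) / qn q (m13 - m23 + 1)) : ℝ) : ℂ) • bv m13 m23 m33 1 x
        + ((Real.sqrt (qn q (m13 - x) * qn q (m13 - m23)) / qn q (m13 - m23 + 1) : ℝ) : ℂ) •
            bv m13 m23 m33 2 x
  hE32₁ : ∀ x : ℤ, InR m13 m23 m33 1 x →
    E32 (bv m13 m23 m33 1 x) =
      ((q * Real.sqrt (qn q (m13 - x) / qn q (m13 - m23 + 1)) : ℝ) : ℂ) • bv m13 m23 m33 3 x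
  hE32₂ : ∀ x : ℤ, InR m13 m23 m33 2 x →
    E32 (bv m13 m23 m33 2 x) =
      -(((q * Real.sqrt (qn q (x - m23 + 1) / qn q (m13 - m23)) : ℝ) : ℂ) • bv m13 m23 m33 3 x)
  hE32₃ : ∀ x : ℤ, InR m13 m23 m33 3 x → E32 (bv m13 m23 m33 3 x) = 0

/-- A subspace `U` of `W` is invariant if it is stable under all seven
operators `E11, E22, E33, E12, E21, E23, E32`. -/
def Invariant (q : ℝ) (m13 m23 m33 : ℤ) (R : GZ q m13 m23 m33)
    (U : Submodule ℂ (Wsp m13 m23 m33)) : Prop :=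
  ∀ E ∈ ({R.E11, R.E22, R.E33, R.E12, R.E21, R.E23, R.E32} :
      Set (Wsp m13 m23 m33 →ₗ[ℂ] Wsp m13 m23 m33)),
    ∀ x ∈ U, E x ∈ U

/-!
Put `I₁ = V₂ ⊔ V₃`. The coefficients of `E23` leading from `V₂` to `V₀` and from `V₃` to `V₁` are
multiples of `[m13 + m33 + 1]`, so `I₁` is invariant as soon as this number vanishes.

Moreover, if `[m23 + m33] ≠ 0`, an invariant `U` not contained in `I₁` is all of `W`. Choose
`u ∈ U` with a nonzero coefficient at some `v(0, x)` or `v(1, x)`. Since `E11` and `E33` are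
diagonal, `U` contains the weight components of `u`, one of which is a nonzero multiple of `v(0, x)`
or a combination `a v(1, x) + b v(2, x)` with `a ≠ 0`. In the second case `E12` raises this
combination until only a multiple of `v(1, m13)` is left, because `V₂` stops at `m11 = m13 - 1`, and
`E23` then produces `v(0, m13)`. So `V₀ ≤ U`, and `E32` recovers `V₁`, `V₂` and `V₃` from `V₀`.
-/

section Diagonal

variable {ι A K : Type*} [CommRing A] [Field K]

lemma aeval_apply_of_diagonal {T : Module.End A (ι →₀ A)} {ev : ι → A}
    (hT : ∀ i, T (Finsupp.single i 1) = ev i • Finsupp.single i 1) (p : Polynomial A)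
    (u : ι →₀ A) (i : ι) : Polynomial.aeval T p u i = p.eval (ev i) * u i := by
  classical
  induction u using Finsupp.induction_linear with
  | zero => simp
  | add f g hf hg => rw [map_add, Finsupp.add_apply, hf, hg, Finsupp.add_apply, mul_add]
  | single j a =>
    rw [← Finsupp.smul_single_one, map_smul, Module.End.aeval_apply_of_mem_apply_eq_smul (hT j)]
    rcases eq_or_ne j i with rfl | hji
    · simp [mul_comm]
    · simp [hji]

/-- Lagrange interpolation turns the restriction to a set of eigenvalues into a polynomial in `T`
on each finitely supported vector. -/
lemma filter_mem_of_diagonal {T : Module.End K (ι →₀ K)} {ev : ι → K}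
    (hT : ∀ i, T (Finsupp.single i 1) = ev i • Finsupp.single i 1)
    {U : Submodule K (ι →₀ K)} (hU : U ∈ T.invtSubmodule) {u : ι →₀ K} (hu : u ∈ U)
    (P : K → Prop) [DecidablePred P] : u.filter (fun i => P (ev i)) ∈ U := by
  classical
  let p := Lagrange.interpolate (u.support.image ev) id fun μ => if P μ then 1 else 0
  have hp : Polynomial.aeval T p u = u.filter fun i => P (ev i) := by
    ext i
    rw [aeval_apply_of_diagonal hT, Finsupp.filter_apply]
    by_cases hi : u i = 0
    · simp [hi]
    · have hmem : ev i ∈ u.support.image ev :=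
        Finset.mem_image_of_mem _ (Finsupp.mem_support_iff.2 hi)
      have hev : p.eval (ev i) = if P (ev i) then 1 else 0 :=
        Lagrange.eval_interpolate_at_node _ Function.injective_id.injOn hmem
      rw [hev, ite_mul, one_mul, zero_mul]
  rw [← hp]
  exact Polynomial.aeval_apply_smul_mem_of_le_comap hu p T hU

end Diagonal

section Submodules

variable {M : Type*} [AddCommGroup M]

lemma ofReal_smul_mem_iff [Module ℂ M] {U : Submodule ℂ M} {c : ℝ} (hc : c ≠ 0) {w : M} :
    (c : ℂ) • w ∈ U ↔ w ∈ U :=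
  U.smul_mem_iff (Complex.ofReal_ne_zero.2 hc)

lemma eq_bot_or_eq_top_of_comap_mkQ {A : Type*} [Ring A] [Module A M] {N : Submodule A M}
    {p : Submodule A (M ⧸ N)} (h : p.comap N.mkQ ≤ N ∨ p.comap N.mkQ = ⊤) : p = ⊥ ∨ p = ⊤ := by
  have hinj := Submodule.comap_injective_of_surjective N.mkQ_surjective
  refine h.imp (fun hle => hinj ?_) fun htop => hinj (htop.trans (Submodule.comap_top _).symm)
  rw [Submodule.comap_bot, Submodule.ker_mkQ]
  exact le_antisymm hle (Submodule.le_comap_mkQ N p)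

end Submodules

section QNumber

lemma qn_zero (q : ℝ) : qn q 0 = 0 := by simp [qn]

lemma qn_neg (q : ℝ) (x : ℤ) : qn q (-x) = -qn q x := by
  rw [qn, qn, neg_neg, ← neg_div, neg_sub]

variable {q : ℝ} {x : ℤ}

lemma qn_pos (hq : 0 < q) (hq1 : q ≠ 1) (hx : 0 < x) : 0 < qn q x := by
  have hneg : -x < x := by omega
  rcases lt_or_gt_of_ne hq1 with h | h
  · exact div_pos_of_neg_of_neg (sub_neg.2 (zpow_lt_zpow_right_of_lt_one₀ hq h hneg))
      (sub_neg.2 (h.trans ((one_lt_inv₀ hq).2 h)))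
  · exact div_pos (sub_pos.2 (zpow_lt_zpow_right₀ h hneg))
      (sub_pos.2 ((inv_lt_one_of_one_lt₀ h).trans h))

lemma qn_ne_zero (hq : 0 < q) (hq1 : q ≠ 1) (hx : x ≠ 0) : qn q x ≠ 0 := by
  rcases hx.lt_or_gt with h | h
  · have hpos := qn_pos hq hq1 (neg_pos.2 h)
    rw [qn_neg] at hpos
    exact (neg_pos.1 hpos).ne
  · exact (qn_pos hq hq1 h).ne'

end QNumber

section Sectors

variable {m13 m23 m33 : ℤ} {k : Fin 4} {x : ℤ}

lemma inR_zero : InR m13 m23 m33 0 x ↔ m23 ≤ x ∧ x ≤ m13 := Iff.rfl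

lemma inR_one : InR m13 m23 m33 1 x ↔ m23 - 1 ≤ x ∧ x ≤ m13 := Iff.rfl

lemma inR_two : InR m13 m23 m33 2 x ↔ m23 ≤ x ∧ x ≤ m13 - 1 := Iff.rfl

lemma inR_three : InR m13 m23 m33 3 x ↔ m23 - 1 ≤ x ∧ x ≤ m13 - 1 := Iff.rfl

lemma bv_of_inR (h : InR m13 m23 m33 k x) :
    bv m13 m23 m33 k x = Finsupp.single ⟨(k, x), h⟩ 1 := dif_pos h

lemma bv_of_not_inR (h : ¬ InR m13 m23 m33 k x) : bv m13 m23 m33 k x = 0 := dif_neg h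

lemma bv_two_top : bv m13 m23 m33 2 m13 = 0 :=
  bv_of_not_inR (by rw [inR_two]; omega)

lemma smul_bv_mem_Vk (c : ℂ) (k : Fin 4) (x : ℤ) :
    c • bv m13 m23 m33 k x ∈ Vk m13 m23 m33 k :=
  Submodule.smul_mem _ _ (Submodule.subset_span ⟨x, rfl⟩)

lemma Vk_le_iff {U : Submodule ℂ (Wsp m13 m23 m33)} :
    Vk m13 m23 m33 k ≤ U ↔ ∀ x, InR m13 m23 m33 k x → bv m13 m23 m33 k x ∈ U := by
  refine ⟨fun h x _ => h (Submodule.subset_span ⟨x, rfl⟩), fun h => Submodule.span_le.2 ?_⟩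
  rintro _ ⟨x, rfl⟩
  by_cases hx : InR m13 m23 m33 k x
  · exact h x hx
  · rw [bv_of_not_inR hx]
    exact U.zero_mem

lemma Vk_eq_supported :
    Vk m13 m23 m33 k = Finsupp.supported ℂ ℂ {i : Idx m13 m23 m33 | i.1.1 = k} := by
  refine le_antisymm (Vk_le_iff.2 fun x hx => ?_) ?_
  · rw [bv_of_inR hx]
    exact Finsupp.single_mem_supported _ _ rfl
  · rw [Finsupp.supported_eq_span_single, Submodule.span_le]
    rintro _ ⟨i, rfl, rfl⟩
    exact Submodule.subset_span ⟨i.1.2, bv_of_inR i.2⟩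

lemma iSup_Vk (m13 m23 m33 : ℤ) : ⨆ k, Vk m13 m23 m33 k = ⊤ := by
  simp_rw [Vk_eq_supported]
  rw [← Finsupp.supported_iUnion, ← Finsupp.supported_univ]
  congr 1
  exact Set.eq_univ_of_forall fun i => Set.mem_iUnion.2 ⟨i.1.1, rfl⟩

/-- The coefficient of `u` at `v(k, x)`, extended by `0` to the `x` outside the range of the
sector `k`. -/
def coeff (u : Wsp m13 m23 m33) (k : Fin 4) (x : ℤ) : ℂ :=
  if h : InR m13 m23 m33 k x then u ⟨(k, x), h⟩ else 0

lemma coeff_eq_apply (u : Wsp m13 m23 m33) (i : Idx m13 m23 m33) :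
    coeff u i.1.1 i.1.2 = u i := dif_pos i.2

lemma inR_of_coeff_ne_zero {u : Wsp m13 m23 m33} (h : coeff u k x ≠ 0) : InR m13 m23 m33 k x :=
  by_contra fun hx => h (dif_neg hx)

lemma coeff_smul_bv_apply (u : Wsp m13 m23 m33) (k : Fin 4) (x : ℤ) (i : Idx m13 m23 m33) :
    (coeff u k x • bv m13 m23 m33 k x) i = if i.1 = (k, x) then u i else 0 := by
  by_cases hi : i.1 = (k, x)
  · obtain ⟨_, hx⟩ := i
    obtain rfl := hi
    simp [coeff, hx, bv_of_inR hx]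
  · by_cases hx : InR m13 m23 m33 k x
    · have hne : ⟨(k, x), hx⟩ ≠ i := fun h => hi (h ▸ rfl)
      simp [bv_of_inR hx, hi, hne]
    · simp [bv_of_not_inR hx, hi]

/-- The subspace `I₁ = V₂ ⊔ V₃`, the maximal invariant subspace in the class 1 nontypical case. -/
abbrev I₁ (m13 m23 m33 : ℤ) : Submodule ℂ (Wsp m13 m23 m33) :=
  Vk m13 m23 m33 2 ⊔ Vk m13 m23 m33 3

lemma mem_I₁_iff {u : Wsp m13 m23 m33} :
    u ∈ I₁ m13 m23 m33 ↔ ∀ x, coeff u 0 x = 0 ∧ coeff u 1 x = 0 := by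
  rw [I₁, Vk_eq_supported, Vk_eq_supported, ← Finsupp.supported_union, Finsupp.mem_supported']
  constructor
  · intro h x
    have hzero (k : Fin 4) (hk : k ≠ 2 ∧ k ≠ 3) : coeff u k x = 0 := by
      by_contra hne
      have hx := inR_of_coeff_ne_zero hne
      exact hne ((coeff_eq_apply u ⟨(k, x), hx⟩).trans (h _ (by simpa using hk)))
    exact ⟨hzero 0 (by decide), hzero 1 (by decide)⟩
  · rintro h ⟨⟨k, x⟩, hx⟩ hk
    rw [← coeff_eq_apply u ⟨(k, x), hx⟩]
    fin_cases k
    · exact (h x).1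
    · exact (h x).2
    · simp at hk
    · simp at hk

lemma I₁_ne_top (hm : m23 ≤ m13) : I₁ m13 m23 m33 ≠ ⊤ := by
  intro htop
  have hx : InR m13 m23 m33 0 m13 := inR_zero.2 ⟨hm, le_rfl⟩
  have hmem : bv m13 m23 m33 0 m13 ∈ I₁ m13 m23 m33 := htop ▸ Submodule.mem_top
  have hzero := (mem_I₁_iff.1 hmem m13).1
  simp [coeff, hx, bv_of_inR hx] at hzero

/-- The component of `u` in the joint eigenspace of `E11` and `E33` with eigenvalues `x` and `z`. -/
def weightComponent (u : Wsp m13 m23 m33) (x z : ℤ) : Wsp m13 m23 m33 :=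
  u.filter fun i => i.1.2 = x ∧ M32 m13 m23 m33 i.1.1 = z

lemma weightComponent_m33 (u : Wsp m13 m23 m33) (x : ℤ) :
    weightComponent u x m33 = coeff u 0 x • bv m13 m23 m33 0 x := by
  ext ⟨⟨k, y⟩, hy⟩
  rw [weightComponent, Finsupp.filter_apply, coeff_smul_bv_apply]
  fin_cases k <;> simp [M32, trip]

lemma weightComponent_m33_add_one (u : Wsp m13 m23 m33) (x : ℤ) :
    weightComponent u x (m33 + 1) =
      coeff u 1 x • bv m13 m23 m33 1 x + coeff u 2 x • bv m13 m23 m33 2 x := by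
  ext ⟨⟨k, y⟩, hy⟩
  rw [weightComponent, Finsupp.filter_apply, Finsupp.add_apply, coeff_smul_bv_apply,
    coeff_smul_bv_apply]
  fin_cases k <;> simp [M32, trip]

end Sectors

namespace GZ

variable {q : ℝ} {m13 m23 m33 : ℤ} (R : GZ q m13 m23 m33)

/-- Outside the range both sides vanish; just below it this is because of the factor `[0]`. -/
lemma E12_bv (k : Fin 4) (x : ℤ) :
    R.E12 (bv m13 m23 m33 k x) =
      ((Real.sqrt (qn q (M12 m13 m23 m33 k - x) * qn q (x - M22 m13 m23 m33 k + 1)) : ℝ) : ℂ) •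
        bv m13 m23 m33 k (x + 1) := by
  by_cases hx : InR m13 m23 m33 k x
  · exact R.hE12 k x hx
  by_cases hx' : InR m13 m23 m33 k (x + 1)
  · obtain rfl : x = M22 m13 m23 m33 k - 1 := by
      unfold InR at hx hx'
      omega
    simp [bv_of_not_inR hx, qn_zero]
  · simp [bv_of_not_inR hx, bv_of_not_inR hx']

lemma Vk_mem_invtSubmodule (k : Fin 4) {E : Module.End ℂ (Wsp m13 m23 m33)}
    (hE : E ∈ ({R.E11, R.E22, R.E33, R.E12, R.E21} : Set (Module.End ℂ (Wsp m13 m23 m33)))) :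
    Vk m13 m23 m33 k ∈ E.invtSubmodule := by
  refine Vk_le_iff.2 fun x hx => Submodule.mem_comap.2 ?_
  rcases hE with rfl | rfl | rfl | rfl | rfl
  · rw [R.hE11 k x hx]
    exact smul_bv_mem_Vk _ _ _
  · rw [R.hE22 k x hx]
    exact smul_bv_mem_Vk _ _ _
  · rw [R.hE33 k x hx]
    exact smul_bv_mem_Vk _ _ _
  · rw [R.hE12 k x hx]
    exact smul_bv_mem_Vk _ _ _
  · rw [R.hE21 k x hx]
    exact smul_bv_mem_Vk _ _ _

lemma Vk_two_le_comap_E32 : Vk m13 m23 m33 2 ≤ (Vk m13 m23 m33 3).comap R.E32 := by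
  refine Vk_le_iff.2 fun x hx => Submodule.mem_comap.2 ?_
  rw [R.hE32₂ x hx]
  exact Submodule.neg_mem _ (smul_bv_mem_Vk _ _ _)

lemma Vk_three_le_ker_E32 : Vk m13 m23 m33 3 ≤ LinearMap.ker R.E32 :=
  Vk_le_iff.2 R.hE32₃

lemma Vk_two_le_ker_E23 (h : m13 + m33 + 1 = 0) : Vk m13 m23 m33 2 ≤ LinearMap.ker R.E23 := by
  refine Vk_le_iff.2 fun x hx => LinearMap.mem_ker.2 ?_
  rw [R.hE23₂ x hx, h, qn_zero, mul_zero, Complex.ofReal_zero, zero_smul]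

lemma Vk_three_le_comap_E23 (h : m13 + m33 + 1 = 0) :
    Vk m13 m23 m33 3 ≤ (Vk m13 m23 m33 2).comap R.E23 := by
  refine Vk_le_iff.2 fun x hx => Submodule.mem_comap.2 ?_
  rw [R.hE23₃ x hx, h, qn_zero, mul_zero, Complex.ofReal_zero, zero_smul, zero_sub]
  exact Submodule.neg_mem _ (smul_bv_mem_Vk _ _ _)

lemma invariant_I₁ (h : m13 + m33 + 1 = 0) : Invariant q m13 m23 m33 R (I₁ m13 m23 m33) := by
  have even {E : Module.End ℂ (Wsp m13 m23 m33)} (hE : E ∈ ({R.E11, R.E22, R.E33, R.E12, R.E21} :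
      Set (Module.End ℂ (Wsp m13 m23 m33)))) : I₁ m13 m23 m33 ∈ E.invtSubmodule :=
    E.invtSubmodule.sup_mem (R.Vk_mem_invtSubmodule 2 hE) (R.Vk_mem_invtSubmodule 3 hE)
  rintro E (rfl | rfl | rfl | rfl | rfl | rfl | rfl)
  · exact even (by simp)
  · exact even (by simp)
  · exact even (by simp)
  · exact even (by simp)
  · exact even (by simp)
  · exact sup_le ((R.Vk_two_le_ker_E23 h).trans (LinearMap.ker_le_comap _))
      ((R.Vk_three_le_comap_E23 h).trans (Submodule.comap_mono le_sup_left))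
  · exact sup_le (R.Vk_two_le_comap_E32.trans (Submodule.comap_mono le_sup_right))
      (R.Vk_three_le_ker_E32.trans (LinearMap.ker_le_comap _))

end GZ

namespace Invariant

variable {q : ℝ} {m13 m23 m33 : ℤ} {R : GZ q m13 m23 m33} {U : Submodule ℂ (Wsp m13 m23 m33)}
  {k : Fin 4} {x : ℤ}

lemma weightComponent_mem (hU : Invariant q m13 m23 m33 R U) {u : Wsp m13 m23 m33} (hu : u ∈ U)
    (x z : ℤ) : weightComponent u x z ∈ U := by
  have hx := filter_mem_of_diagonal (T := R.E11) (ev := fun i => (i.1.2 : ℂ))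
    (fun i => by simpa only [bv_of_inR i.2] using R.hE11 i.1.1 i.1.2 i.2)
    (hU R.E11 (by simp)) hu (· = (x : ℂ))
  have hxz := filter_mem_of_diagonal (T := R.E33) (ev := fun i => (M32 m13 m23 m33 i.1.1 : ℂ))
    (fun i => by simpa only [bv_of_inR i.2] using R.hE33 i.1.1 i.1.2 i.2)
    (hU R.E33 (by simp)) hx (· = (z : ℂ))
  convert hxz using 1
  ext i
  simp only [weightComponent, Finsupp.filter_apply, Int.cast_inj, ite_and]
  split_ifs <;> rfl

lemma bv_add_one_mem_iff (hU : Invariant q m13 m23 m33 R U) (hq : 0 < q) (hq1 : q ≠ 1)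
    (hx : InR m13 m23 m33 k x) (hx' : InR m13 m23 m33 k (x + 1)) :
    bv m13 m23 m33 k (x + 1) ∈ U ↔ bv m13 m23 m33 k x ∈ U := by
  have hlow := hx.1
  have hhigh := hx'.2
  have hup : 0 < qn q (M12 m13 m23 m33 k - x) := qn_pos hq hq1 (by omega)
  have hdown : 0 < qn q (x - M22 m13 m23 m33 k + 1) := qn_pos hq hq1 (by omega)
  constructor <;> intro h
  · have hE := hU R.E21 (by simp) _ h
    rwa [R.hE21 k _ hx', add_sub_cancel_right, sub_add_eq_sub_sub, sub_add_cancel,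
      add_sub_right_comm, ofReal_smul_mem_iff (by positivity)] at hE
  · have hE := hU R.E12 (by simp) _ h
    rwa [R.hE12 k x hx, ofReal_smul_mem_iff (by positivity)] at hE

lemma Vk_le_of_bv_mem (hU : Invariant q m13 m23 m33 R U) (hq : 0 < q) (hq1 : q ≠ 1)
    (hx : InR m13 m23 m33 k x) (h : bv m13 m23 m33 k x ∈ U) : Vk m13 m23 m33 k ≤ U := by
  refine Vk_le_iff.2 fun y => ?_
  induction y using Int.inductionOn' (b := x) with
  | zero => exact fun _ => h
  | succ y hxy ih =>
    intro hy'
    have hy : InR m13 m23 m33 k y := ⟨hx.1.trans hxy, by linarith [hy'.2]⟩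
    exact (hU.bv_add_one_mem_iff hq hq1 hy hy').2 (ih hy)
  | pred y hyx ih =>
    intro hy'
    have hy : InR m13 m23 m33 k y := ⟨by linarith [hy'.1], hyx.trans hx.2⟩
    rw [← sub_add_cancel y 1] at hy ih
    exact (hU.bv_add_one_mem_iff hq hq1 hy' hy).1 (ih hy)

/-- The raising operator `E12` separates `V₁` from `V₂`, which ends one step earlier. -/
lemma Vk_one_le_of_add_mem (hU : Invariant q m13 m23 m33 R U) (hq : 0 < q) (hq1 : q ≠ 1)
    (hx : InR m13 m23 m33 1 x) {a b : ℂ} (ha : a ≠ 0)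
    (h : a • bv m13 m23 m33 1 x + b • bv m13 m23 m33 2 x ∈ U) : Vk m13 m23 m33 1 ≤ U := by
  obtain ⟨hlow, hhigh⟩ := inR_one.1 hx
  clear hx
  induction x, hhigh using Int.leInductionDown generalizing a b with
  | base =>
    rw [bv_two_top, smul_zero, add_zero, U.smul_mem_iff ha] at h
    exact hU.Vk_le_of_bv_mem hq hq1 (inR_one.2 ⟨hlow, le_rfl⟩) h
  | pred x hx ih =>
    have hE := hU R.E12 (by simp) _ h
    rw [map_add, map_smul, map_smul, R.E12_bv, R.E12_bv, sub_add_cancel, smul_smul, smul_smul] at hE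
    have hup : 0 < qn q (m13 - (x - 1)) := qn_pos hq hq1 (by omega)
    have hdown : 0 < qn q (x - 1 - (m23 - 1) + 1) := qn_pos hq hq1 (by omega)
    have hsqrt : Real.sqrt (qn q (m13 - (x - 1)) * qn q (x - 1 - (m23 - 1) + 1)) ≠ 0 := by
      positivity
    exact ih (mul_ne_zero ha (Complex.ofReal_ne_zero.2 hsqrt)) hE (by omega)

lemma Vk_zero_le_of_Vk_one_le (hU : Invariant q m13 m23 m33 R U) (hq : 0 < q) (hq1 : q ≠ 1)
    (hm : m23 ≤ m13) (h23 : m23 + m33 ≠ 0) (h : Vk m13 m23 m33 1 ≤ U) : Vk m13 m23 m33 0 ≤ U := by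
  have hx : InR m13 m23 m33 1 m13 := inR_one.2 ⟨by omega, le_rfl⟩
  have hE := hU R.E23 (by simp) _ (Vk_le_iff.1 h m13 hx)
  have hd : 0 < qn q (m13 - m23 + 1) := qn_pos hq hq1 (by omega)
  have hsqrt : Real.sqrt (qn q (m13 - m23 + 1) / qn q (m13 - m23 + 1)) ≠ 0 := by positivity
  rw [R.hE23₁ m13 hx, ofReal_smul_mem_iff (mul_ne_zero hsqrt (qn_ne_zero hq hq1 h23))] at hE
  exact hU.Vk_le_of_bv_mem hq hq1 (inR_zero.2 ⟨hm, le_rfl⟩) hE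

lemma Vk_one_le_of_Vk_zero_le (hU : Invariant q m13 m23 m33 R U) (hq : 0 < q) (hq1 : q ≠ 1)
    (hm : m23 ≤ m13) (h : Vk m13 m23 m33 0 ≤ U) : Vk m13 m23 m33 1 ≤ U := by
  have hx : InR m13 m23 m33 0 m13 := inR_zero.2 ⟨hm, le_rfl⟩
  have hE := hU R.E32 (by simp) _ (Vk_le_iff.1 h m13 hx)
  have hd : 0 < qn q (m13 - m23 + 1) := qn_pos hq hq1 (by omega)
  rw [R.hE32₀ m13 hx, bv_two_top, smul_zero, add_zero, ofReal_smul_mem_iff (by positivity)] at hE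
  exact hU.Vk_le_of_bv_mem hq hq1 (inR_one.2 ⟨by omega, le_rfl⟩) hE

lemma Vk_two_le_of_Vk_zero_le (hU : Invariant q m13 m23 m33 R U) (hq : 0 < q) (hq1 : q ≠ 1)
    (h : Vk m13 m23 m33 0 ≤ U) : Vk m13 m23 m33 2 ≤ U := by
  refine Vk_le_iff.2 fun y hy => ?_
  obtain ⟨hlow, hhigh⟩ := inR_two.1 hy
  have hy₀ : InR m13 m23 m33 0 y := inR_zero.2 ⟨hlow, by omega⟩
  have hy₁ : InR m13 m23 m33 1 y := inR_one.2 ⟨by omega, by omega⟩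
  have hE := hU R.E32 (by simp) _ (Vk_le_iff.1 h y hy₀)
  have hv₁ := Vk_le_iff.1 (hU.Vk_one_le_of_Vk_zero_le hq hq1 (by omega) h) y hy₁
  have hd : 0 < qn q (m13 - m23 + 1) := qn_pos hq hq1 (by omega)
  have hn₁ : 0 < qn q (m13 - y) := qn_pos hq hq1 (by omega)
  have hn₂ : 0 < qn q (m13 - m23) := qn_pos hq hq1 (by omega)
  rwa [R.hE32₀ y hy₀, U.add_mem_iff_right (U.smul_mem _ hv₁),
    ofReal_smul_mem_iff (by positivity)] at hE

lemma Vk_three_le_of_Vk_one_le (hU : Invariant q m13 m23 m33 R U) (hq : 0 < q) (hq1 : q ≠ 1)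
    (h : Vk m13 m23 m33 1 ≤ U) : Vk m13 m23 m33 3 ≤ U := by
  refine Vk_le_iff.2 fun y hy => ?_
  obtain ⟨hlow, hhigh⟩ := inR_three.1 hy
  have hy₁ : InR m13 m23 m33 1 y := inR_one.2 ⟨hlow, by omega⟩
  have hE := hU R.E32 (by simp) _ (Vk_le_iff.1 h y hy₁)
  have hd : 0 < qn q (m13 - m23 + 1) := qn_pos hq hq1 (by omega)
  have hn : 0 < qn q (m13 - y) := qn_pos hq hq1 (by omega)
  rwa [R.hE32₁ y hy₁, ofReal_smul_mem_iff (by positivity)] at hE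

lemma eq_top_of_Vk_zero_le (hU : Invariant q m13 m23 m33 R U) (hq : 0 < q) (hq1 : q ≠ 1)
    (hm : m23 ≤ m13) (h : Vk m13 m23 m33 0 ≤ U) : U = ⊤ := by
  have h₁ := hU.Vk_one_le_of_Vk_zero_le hq hq1 hm h
  have h₂ := hU.Vk_two_le_of_Vk_zero_le hq hq1 h
  have h₃ := hU.Vk_three_le_of_Vk_one_le hq hq1 h₁
  rw [eq_top_iff, ← iSup_Vk, iSup_le_iff]
  intro k
  fin_cases k <;> assumption

theorem le_I₁_or_eq_top (hU : Invariant q m13 m23 m33 R U) (hq : 0 < q) (hq1 : q ≠ 1)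
    (hm : m23 ≤ m13) (h23 : m23 + m33 ≠ 0) : U ≤ I₁ m13 m23 m33 ∨ U = ⊤ := by
  refine or_iff_not_imp_left.2 fun hle => hU.eq_top_of_Vk_zero_le hq hq1 hm ?_
  obtain ⟨u, hu, hu₁⟩ := SetLike.not_le_iff_exists.1 hle
  obtain ⟨x, hx⟩ := not_forall.1 (mt mem_I₁_iff.2 hu₁)
  rcases not_and_or.1 hx with h₀ | h₁
  · have hw := hU.weightComponent_mem hu x m33
    rw [weightComponent_m33, U.smul_mem_iff h₀] at hw
    exact hU.Vk_le_of_bv_mem hq hq1 (inR_of_coeff_ne_zero h₀) hw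
  · have hw := hU.weightComponent_mem hu x (m33 + 1)
    rw [weightComponent_m33_add_one] at hw
    exact hU.Vk_zero_le_of_Vk_one_le hq hq1 hm h23
      (hU.Vk_one_le_of_add_mem hq hq1 (inR_of_coeff_ne_zero h₁) h₁ hw)

end Invariant

/-- Assume `m13 + m33 + 1 = 0` (class 1 nontypicality). Then
`I_1 := V_2 ⊕ V_3` is a proper invariant subspace of `W`, every proper
invariant subspace of `W` is contained in `I_1`, and the operators induced by
`E11, E22, E33, E12, E21, E23, E32` on the quotient `W/I_1` leave no subspace
invariant except `{0}` and `W/I_1`: `W/I_1` carries the class 1 nontypical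
irreducible representation of `U_q[gl(2/1)]`. -/
theorem stmt_13 (q : ℝ) (hq : 0 < q) (hq1 : q ≠ 1)
    (m13 m23 m33 : ℤ) (hm : m23 ≤ m13) (R : GZ q m13 m23 m33)
    (h1 : m13 + m33 + 1 = 0) :
    Invariant q m13 m23 m33 R (Vk m13 m23 m33 2 ⊔ Vk m13 m23 m33 3) ∧
    Vk m13 m23 m33 2 ⊔ Vk m13 m23 m33 3 ≠ ⊤ ∧
    (∀ U : Submodule ℂ (Wsp m13 m23 m33), Invariant q m13 m23 m33 R U → U ≠ ⊤ →
      U ≤ Vk m13 m23 m33 2 ⊔ Vk m13 m23 m33 3) ∧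
    (∀ Ubar : Submodule ℂ
        (Wsp m13 m23 m33 ⧸ (Vk m13 m23 m33 2 ⊔ Vk m13 m23 m33 3)),
      (∀ E ∈ ({R.E11, R.E22, R.E33, R.E12, R.E21, R.E23, R.E32} :
          Set (Wsp m13 m23 m33 →ₗ[ℂ] Wsp m13 m23 m33)),
        ∀ x : Wsp m13 m23 m33,
          (Vk m13 m23 m33 2 ⊔ Vk m13 m23 m33 3).mkQ x ∈ Ubar →
          (Vk m13 m23 m33 2 ⊔ Vk m13 m23 m33 3).mkQ (E x) ∈ Ubar) →
      Ubar = ⊥ ∨ Ubar = ⊤) := by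
  have h23 : m23 + m33 ≠ 0 := by omega
  refine ⟨R.invariant_I₁ h1, I₁_ne_top hm, fun U hU hne => ?_, fun Ubar hUbar => ?_⟩
  · exact (hU.le_I₁_or_eq_top hq hq1 hm h23).resolve_right hne
  · have hcomap : Invariant q m13 m23 m33 R (Ubar.comap (I₁ m13 m23 m33).mkQ) := hUbar
    exact eq_bot_or_eq_top_of_comap_mkQ (hcomap.le_I₁_or_eq_top hq hq1 hm h23)
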